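/- For every cardinal number α ≥ 𝔠, there exists a metrizable topological space X with |X| = α with the following property: for every class M of continuous maps between topological spaces such that every member of M is injective, M contains every homeomorphism of a space onto a clopen subspace of another space, and M is closed under composition, every quasiordered set (Q, ≤) with |Q| ≤ α has an M-representation by clopen subspaces of X; that is, there is a family {X(q) : q ∈ Q} of pairwise non-homeomorphic clopen subsets of X such that q ≤ q' if and only if there exists a map in M with domain X(q) and codomain X(q'). -/

import Mathlib

universe u

open Cardinal

/-- A class `M` of continuous maps between topological spaces (in universe `u`) such that
every member of `M` is injective, `M` contains every homeomorphism of a space onto a clopen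
subspace of another space, and `M` is closed under composition. -/
def IsGoodClass
    (M : ∀ (Y Z : Type u) [TopologicalSpace Y] [TopologicalSpace Z], C(Y, Z) → Prop) :
    Prop :=
  (∀ (Y Z : Type u) [TopologicalSpace Y] [TopologicalSpace Z] (f : C(Y, Z)),
      M Y Z f → Function.Injective f) ∧
  (∀ (Y Z : Type u) [TopologicalSpace Y] [TopologicalSpace Z] (f : C(Y, Z)),
      (IsClopen (Set.range f) ∧ ∃ e : Y ≃ₜ Set.range f, ∀ y, (e y : Z) = f y) →
      M Y Z f) ∧
  (∀ (Y Z W : Type u) [TopologicalSpace Y] [TopologicalSpace Z] [TopologicalSpace W]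
      (f : C(Y, Z)) (g : C(Z, W)), M Y Z f → M Z W g → M Y W (g.comp f))

/-- The `M`-representation property of the space `X` for every quasiorder and every
good class `M`. -/
def RepresentsByClasses (α : Cardinal.{u}) (X : Type u) [TopologicalSpace X] : Prop :=
  ∀ M : ∀ (Y Z : Type u) [TopologicalSpace Y] [TopologicalSpace Z], C(Y, Z) → Prop,
    IsGoodClass M →
    ∀ (Q : Type u) (le : Q → Q → Prop), #Q ≤ α →
      (∀ q, le q q) → (∀ a b c, le a b → le b c → le a c) →
      ∃ Xq : Q → Set X,
        (∀ q, IsClopen (Xq q)) ∧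
        (∀ q q', q ≠ q' → IsEmpty ((Xq q) ≃ₜ (Xq q'))) ∧
        (∀ q q', le q q' ↔ ∃ f : C((Xq q), (Xq q')), M (Xq q) (Xq q') f)

/-!
A transfinite recursion in the style of Bernstein produces sets `K t` in the complex plane, for
`t : ℕ`, which meet every uncountable closed set and admit no continuous injections between their
nonempty open parts other than inclusions into the same set. Being so thick, they are connected.

Fix a well-ordered set `I` of cardinality `α`. Place a copy of some `K t` on each edge of the
complete graph on `WithTop I`, realised in `ℓ^∞`. A continuous injection between two such graphs
sends edges to edges carrying the same `K t`, hence induces a strictly increasing map of `WithTop I`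
which preserves `t`. A colouring of the pairs that records ladders to the points of cofinality `ω`
forces this map to be the identity, and one more bit of colour tells apart graphs
attached to different `i : I`. This gives connected spaces `Y i` such that the only continuous
injections between them are the identities.

The telescope of `Y i` consists of countably many copies of `Y i`, the levels, together with limit
points `limit k`, for `k : ℤ`, which remember how the levels are numbered. Moving all levels up by
two embeds the telescope as a clopen subset avoiding level zero, whereas a bijection onto the
complement of level zero would amount to moving the levels up by one, which is not compatible with
the limit points. Let `X` be the disjoint sum of all telescopes. For an injection `e : Q → I`, the
set representing `q` is the whole telescope of `e q` together with the telescopes of `e r`, `r ≤ q`,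
without their levels zero: all the elements below `q` can be read off from it, and `q` is the only
one among them with a whole telescope.
-/

section Rigidity

open Set Topology Filter

variable {P : Type u}

/-- A relation `T` is `κ`-large if some pair of distinct points in it avoids any two given sets of
fewer than `κ` first, respectively second, coordinates. -/
def IsLarge (κ : Cardinal.{u}) (T : Set (P × P)) : Prop :=
  ∀ A B : Set P, #A < κ → #B < κ → ∃ z ∈ T, z.1 ≠ z.2 ∧ z.1 ∉ A ∧ z.2 ∉ B

theorem exists_superset_separating_pairs {J : Type u} {κ : Cardinal.{u}} (hκ : ℵ₀ ≤ κ)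
    (hJ : #J ≤ κ) {C : Set P} (hC : #C < κ) {T : J → Set (P × P)} (hT : ∀ j, IsLarge κ (T j)) :
    ∃ K, C ⊆ K ∧ ∀ j, ∃ z ∈ T j, z.1 ∈ K ∧ z.2 ∉ K := by
  obtain ⟨r, wo, hr⟩ := Cardinal.exists_ord_eq J
  have choose_next (j : J) (earlier : ∀ i, r i j → P × P) : ∃ z ∈ T j, z.1 ≠ z.2 ∧
      (∀ i h, z.1 ≠ (earlier i h).2) ∧ (∀ i h, z.2 ≠ (earlier i h).1) ∧ z.2 ∉ C := by
    have hs : #{i // r i j} < κ := (Cardinal.card_typein_lt j hr).trans_le hJ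
    let earlier' (i : {i // r i j}) := earlier i.1 i.2
    obtain ⟨z, hz, hne, hA, hB⟩ := hT j (range fun i => (earlier' i).2)
      (range (fun i => (earlier' i).1) ∪ C) (mk_range_le.trans_lt hs)
      ((mk_union_le _ _).trans_lt (add_lt_of_lt hκ (mk_range_le.trans_lt hs) hC))
    exact ⟨z, hz, hne, fun i h e => hA ⟨⟨i, h⟩, e.symm⟩,
      fun i h e => hB (Or.inl ⟨⟨i, h⟩, e.symm⟩), fun h => hB (Or.inr h)⟩
  choose next next_mem next_ne next_fst next_snd next_notMem using choose_next
  let Z : J → P × P := wo.toIsWellFounded.wf.fix next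
  have hZ (j) : Z j = next j fun i _ => Z i := WellFounded.fix_eq _ _ _
  refine ⟨range (fun j => (Z j).1) ∪ C, subset_union_right, fun j =>
    ⟨Z j, hZ j ▸ next_mem _ _, Or.inl ⟨j, rfl⟩, ?_⟩⟩
  rintro (⟨i, hi : (Z i).1 = (Z j).2⟩ | hjC)
  · rcases trichotomous_of r i j with hij | rfl | hji
    · rw [hZ j] at hi
      exact next_snd j _ i hij hi.symm
    · rw [hZ i] at hi
      exact next_ne i _ hi
    · rw [hZ i] at hi
      exact next_fst i _ j hji hi
  · rw [hZ j] at hjC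
    exact next_notMem j _ hjC

theorem IsLarge.mono {κ : Cardinal.{u}} {S T : Set (P × P)} (hS : IsLarge κ S) (hST : S ⊆ T) :
    IsLarge κ T := fun A B hA hB =>
  let ⟨z, hz, h⟩ := hS A B hA hB
  ⟨z, hST hz, h⟩

theorem isLarge_prod_univ {κ : Cardinal.{u}} (hκ : ℵ₀ ≤ κ) {F : Set P} (hF : κ ≤ #F) :
    IsLarge κ (F ×ˢ (univ : Set P)) := by
  intro A B hA hB
  obtain ⟨x, hxF, hxA⟩ := not_subset.1 fun h => ((mk_le_mk_of_subset h).trans_lt hA).not_ge hF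
  obtain ⟨y, -, hy⟩ := not_subset.1 fun h : F ⊆ insert x B =>
    (((mk_le_mk_of_subset h).trans (mk_insert_le)).trans_lt
      (add_lt_of_lt hκ hB (one_lt_aleph0.trans_le hκ))).not_ge hF
  rw [mem_insert_iff, not_or] at hy
  exact ⟨(x, y), ⟨hxF, trivial⟩, Ne.symm hy.1, hxA, hy.2⟩

theorem isLarge_graphOn {κ : Cardinal.{u}} (hκ : ℵ₀ ≤ κ) {S : Set P} (hS : κ ≤ #S) {h : P → P}
    (hinj : InjOn h S) (hne : ∀ x ∈ S, h x ≠ x) : IsLarge κ (S.graphOn h) := by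
  intro A B hA hB
  have h_preimage : #(S ∩ h ⁻¹' B : Set P) ≤ #B :=
    mk_le_of_injective (f := fun x => (⟨h x, x.2.2⟩ : B))
      fun x y hxy => Subtype.ext (hinj x.2.1 y.2.1 (congrArg Subtype.val hxy))
  obtain ⟨x, hxS, hx⟩ := not_subset.1 fun hsub : S ⊆ A ∪ (S ∩ h ⁻¹' B) =>
    (((mk_le_mk_of_subset hsub).trans (mk_union_le _ _)).trans_lt
      (add_lt_of_lt hκ hA (h_preimage.trans_lt hB))).not_ge hS
  rw [mem_union, not_or] at hx
  exact ⟨(x, h x), ⟨x, hxS, rfl⟩, (hne x hxS).symm, hx.1, fun hB => hx.2 ⟨hxS, hB⟩⟩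

variable [TopologicalSpace P]

theorem mk_closeds_le_continuum [SecondCountableTopology P] :
    #(TopologicalSpace.Closeds P) ≤ 𝔠 := by
  let _ : MeasurableSpace P := borel P
  have : BorelSpace P := ⟨rfl⟩
  have h_basis := (TopologicalSpace.isBasis_countableBasis P).borel_eq_generateFrom
  refine le_trans ?_ (MeasurableSpace.cardinal_measurableSet_le_continuum
    (s := TopologicalSpace.countableBasis P)
    ((TopologicalSpace.countable_countableBasis P).le_aleph0.trans aleph0_le_continuum))
  rw [← h_basis]
  exact mk_le_of_injective (f := fun F : TopologicalSpace.Closeds P =>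
    (⟨F, F.isClosed.measurableSet⟩ : {t : Set P | MeasurableSet t}))
    fun F F' h => SetLike.coe_injective (congrArg Subtype.val h)

theorem exists_isClosed_subset_not_countable [RegularSpace P]
    (hP : ∀ U : Set P, IsOpen U → U.Nonempty → ¬U.Countable) {U : Set P} (hU : IsOpen U)
    (hne : U.Nonempty) : ∃ F ⊆ U, IsClosed F ∧ ¬F.Countable := by
  obtain ⟨x, hx⟩ := hne
  obtain ⟨F, hFx, hF, hFU⟩ := exists_mem_nhds_isClosed_subset (hU.mem_nhds hx)
  exact ⟨F, hFU, hF, fun hc => hP (interior F) isOpen_interior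
    ⟨x, mem_interior_iff_mem_nhds.2 hFx⟩ (hc.mono interior_subset)⟩

/-- Bernstein's condition: the set meets every uncountable closed set. -/
def MeetsUncountableClosed (K : Set P) : Prop :=
  ∀ F, IsClosed F → ¬F.Countable → (F ∩ K).Nonempty

namespace MeetsUncountableClosed

variable {K : Set P}

/-- The Cantor set is a union of continuum many disjoint uncountable closed sets, and so is the
homeomorphic copy of it inside `F`. -/
theorem continuum_le_mk_inter [PolishSpace P] (hK : MeetsUncountableClosed K) {F : Set P}
    (hF : IsClosed F) (hunc : ¬F.Countable) : 𝔠 ≤ #(F ∩ K : Set P) := by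
  obtain ⟨f, hfF, hf, hinj⟩ := hF.exists_nat_bool_injection_of_not_countable hunc
  let split : (ℕ → Bool) × (ℕ → Bool) ≃ₜ (ℕ → Bool) :=
    Homeomorph.sumArrowHomeomorphProdArrow.symm.trans
      (Homeomorph.piCongrLeft (Y := fun _ => Bool) Equiv.natSumNatEquivNat)
  have slice (s : ℕ → Bool) : ∃ t, f (split (s, t)) ∈ K := by
    have hcont : Continuous fun t => f (split (s, t)) := by fun_prop
    have h_inj : Function.Injective fun t => f (split (s, t)) :=
      hinj.comp (split.injective.comp (Prod.mk_right_injective s))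
    obtain ⟨_, ⟨t, rfl⟩, ht⟩ := hK _ (isCompact_range hcont).isClosed fun hc => by
      have := hc.to_subtype
      have : Uncountable (ℕ → Bool) := aleph0_lt_mk_iff.1 (by simpa using aleph0_lt_continuum)
      exact not_countable (h_inj.codRestrict fun t => mem_range_self t).countable
    exact ⟨t, ht⟩
  choose t ht using slice
  have h_inj : Function.Injective fun s => (⟨f (split (s, t s)), hfF ⟨_, rfl⟩, ht s⟩ : ↥(F ∩ K)) :=
    fun s s' h => congrArg Prod.fst (split.injective (hinj (congrArg Subtype.val h)))
  have h_card := lift_mk_le_lift_mk_of_injective h_inj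
  rwa [lift_uzero, mk_pi, prod_const, mk_bool, mk_nat, lift_id, lift_id, two_power_aleph0,
    lift_continuum] at h_card

theorem diff_countable [PolishSpace P] (hK : MeetsUncountableClosed K) {D : Set P}
    (hD : D.Countable) : MeetsUncountableClosed (K \ D) := by
  intro F hF hunc
  by_contra hempty
  have hsub : F ∩ K ⊆ D := fun x hx => by_contra fun hxD => hempty ⟨x, hx.1, hx.2, hxD⟩
  exact ((hK.continuum_le_mk_inter hF hunc).trans
    (mk_le_mk_of_subset hsub)).not_gt (hD.le_aleph0.trans_lt aleph0_lt_continuum)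

theorem preimage {X : Type*} [TopologicalSpace X] {f : X → P} (hf : IsClosedEmbedding f)
    (hK : MeetsUncountableClosed K) : MeetsUncountableClosed (f ⁻¹' K) := by
  intro F hF hunc
  obtain ⟨_, ⟨x, hxF, rfl⟩, hxK⟩ := hK (f '' F) (hf.isClosedMap _ hF)
    fun hc => hunc (countable_of_injective_of_countable_image hf.injective.injOn hc)
  exact ⟨x, hxF, hxK⟩

theorem continuum_le_mk_inter_of_isOpen [PolishSpace P] (hK : MeetsUncountableClosed K)
    (hP : ∀ U : Set P, IsOpen U → U.Nonempty → ¬U.Countable) {U : Set P} (hU : IsOpen U)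
    (hne : U.Nonempty) : 𝔠 ≤ #(K ∩ U : Set P) := by
  obtain ⟨F, hFU, hF, hunc⟩ := exists_isClosed_subset_not_countable hP hU hne
  exact (hK.continuum_le_mk_inter hF hunc).trans
    (mk_le_mk_of_subset fun y hy => ⟨hy.2, hFU hy.1⟩)

theorem dense [RegularSpace P] (hK : MeetsUncountableClosed K)
    (hP : ∀ U : Set P, IsOpen U → U.Nonempty → ¬U.Countable) : Dense K := by
  refine dense_iff_inter_open.2 fun U hU hne => ?_
  obtain ⟨F, hFU, hF, hunc⟩ := exists_isClosed_subset_not_countable hP hU hne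
  exact (hK F hF hunc).mono (inter_subset_inter_left K hFU)

theorem isPreconnected {E : Type*} [AddCommGroup E] [Module ℝ E] [TopologicalSpace E]
    [ContinuousAdd E] [ContinuousSMul ℝ E] (hE : 1 < Module.rank ℝ E) {K : Set E}
    (hK : MeetsUncountableClosed K) (hdense : Dense K) : IsPreconnected K := by
  intro U V hU hV hKUV hKU hKV
  have h_countable : ((U ∪ V)ᶜ).Countable := by
    by_contra hunc
    obtain ⟨x, hx, hxK⟩ := hK _ (hU.union hV).isClosed_compl hunc
    exact hx (hKUV hxK)
  have h_conn := (h_countable.isConnected_compl_of_one_lt_rank hE).isPreconnected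
  rw [compl_compl] at h_conn
  obtain ⟨x, -, hx⟩ := h_conn U V hU hV subset_rfl
    (hKU.mono fun x hx => ⟨Or.inl hx.2, hx.2⟩) (hKV.mono fun x hx => ⟨Or.inr hx.2, hx.2⟩)
  rw [inter_comm]
  exact hdense.inter_open_nonempty _ (hU.inter hV) ⟨x, hx⟩

end MeetsUncountableClosed

theorem continuum_le_mk_of_isClosed [PolishSpace P] {F : Set P} (hF : IsClosed F)
    (hunc : ¬F.Countable) : 𝔠 ≤ #F := by
  have h_univ : MeetsUncountableClosed (univ : Set P) := fun F _ hunc =>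
    (Set.inter_univ F).symm ▸ nonempty_iff_ne_empty.2 fun h => hunc (h ▸ countable_empty)
  simpa using h_univ.continuum_le_mk_inter hF hunc

/-- No open part of `K` admits an injective continuous map into `K` other than the inclusion. The
map is encoded as the restriction to `K ∩ U` of a total function. -/
def IsLocallyRigid (K : Set P) : Prop :=
  ∀ (U : Set P) (h : P → P), IsOpen U → ContinuousOn h (K ∩ U) → InjOn h (K ∩ U) →
    MapsTo h (K ∩ U) K → EqOn h id (K ∩ U)

theorem eq_of_mem_closure_graphOn {X Y : Type*} [TopologicalSpace X] [TopologicalSpace Y]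
    [T2Space Y] {s : Set X} {h : X → Y} {x : X} {y : Y} (hh : ContinuousWithinAt h s x)
    (hxy : (x, y) ∈ closure (s.graphOn h)) : y = h x := by
  obtain ⟨l, h_graph, hl⟩ := mem_closure_iff_ultrafilter.1 hxy
  have h_graph : ∀ᶠ z : X × Y in l, z.1 ∈ s ∧ h z.1 = z.2 :=
    Filter.mem_of_superset h_graph fun _ => mem_graphOn.1
  have hsnd : Tendsto Prod.snd l (𝓝 y) := (continuous_snd.tendsto (x, y)).mono_left hl
  have hfst : Tendsto Prod.fst l (𝓝[s] x) := tendsto_nhdsWithin_iff.2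
    ⟨(continuous_fst.tendsto (x, y)).mono_left hl, h_graph.mono fun _ h => h.1⟩
  exact tendsto_nhds_unique hsnd ((hh.tendsto.comp hfst).congr' (h_graph.mono fun _ h => h.2))

/-- The part of a relation lying over the points at which it is single-valued. -/
def singleValuedPart (Γ : Set (P × P)) : Set (P × P) :=
  {z ∈ Γ | ∀ y, (z.1, y) ∈ Γ → y = z.2}

theorem graphOn_subset_singleValuedPart_closure [T2Space P] {s : Set P} {h : P → P}
    (hh : ContinuousOn h s) : s.graphOn h ⊆ singleValuedPart (closure (s.graphOn h)) := by
  rintro _ ⟨x, hx, rfl⟩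
  exact ⟨subset_closure ⟨x, hx, rfl⟩, fun y hy => eq_of_mem_closure_graphOn (h := h) (hh x hx) hy⟩

theorem exists_superset_meets_and_separates [PolishSpace P] {C : Set P} (hC : C.Countable) :
    ∃ K, C ⊆ K ∧ MeetsUncountableClosed K ∧ ∀ Γ, IsClosed Γ → IsLarge 𝔠 (singleValuedPart Γ) →
      ∃ z ∈ singleValuedPart Γ, z.1 ∈ K ∧ z.2 ∉ K := by
  let J := {F : TopologicalSpace.Closeds P // 𝔠 ≤ #F} ⊕
    {Γ : TopologicalSpace.Closeds (P × P) // IsLarge 𝔠 (singleValuedPart (Γ : Set (P × P)))}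
  have hJ : #J ≤ 𝔠 := by
    rw [← add_def]
    exact add_le_of_le aleph0_le_continuum ((mk_subtype_le _).trans mk_closeds_le_continuum)
      ((mk_subtype_le _).trans mk_closeds_le_continuum)
  obtain ⟨K, hCK, hK⟩ := exists_superset_separating_pairs aleph0_le_continuum hJ
    (hC.le_aleph0.trans_lt aleph0_lt_continuum)
    (T := Sum.elim (fun F => (F.1 : Set P) ×ˢ (Set.univ : Set P)) (fun Γ => singleValuedPart Γ.1))
    (by rintro (F | Γ); exacts [isLarge_prod_univ aleph0_le_continuum F.2, Γ.2])
  refine ⟨K, hCK, fun F hF hunc => ?_, fun Γ hΓ h => hK (Sum.inr ⟨⟨Γ, hΓ⟩, h⟩)⟩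
  obtain ⟨z, hzF, hzK, -⟩ := hK (Sum.inl ⟨⟨F, hF⟩, continuum_le_mk_of_isClosed hF hunc⟩)
  exact ⟨z.1, hzF.1, hzK⟩

/-- If `h` moved a point, the closure of its graph over a small closed neighbourhood would be one of
the closed relations treated in the construction of `K`, and so `h` would map some point of `K`
outside `K`. -/
theorem exists_superset_isLocallyRigid [PolishSpace P]
    (hP : ∀ U : Set P, IsOpen U → U.Nonempty → ¬U.Countable) {C : Set P} (hC : C.Countable) :
    ∃ K, C ⊆ K ∧ MeetsUncountableClosed K ∧ IsLocallyRigid K := by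
  obtain ⟨K, hCK, hK, hsep⟩ := exists_superset_meets_and_separates hC
  refine ⟨K, hCK, hK, fun U h hU hcont hinj hmaps x hx => ?_⟩
  by_contra hne
  have hmoved : ∀ᶠ y in 𝓝[K ∩ U] x, h y ≠ y :=
    ((hcont x hx).prodMk continuousWithinAt_id).eventually
      (isClosed_diagonal.isOpen_compl.eventually_mem hne)
  obtain ⟨N, hN, hxN, hNne⟩ := mem_nhdsWithin.1 hmoved
  obtain ⟨B, ⟨hxB, hB⟩, hBNU⟩ := (nhds_basis_opens x).nhds_closure.mem_iff.1
    ((hN.inter hU).mem_nhds ⟨hxN, hx.2⟩)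
  have hBU : K ∩ B ⊆ K ∩ U := fun y hy => ⟨hy.1, (hBNU (subset_closure hy.2)).2⟩
  have h_large : IsLarge 𝔠 ((K ∩ B).graphOn h) :=
    isLarge_graphOn aleph0_le_continuum (hK.continuum_le_mk_inter_of_isOpen hP hB ⟨x, hxB⟩)
      (hinj.mono hBU) fun y hy => hNne ⟨(hBNU (subset_closure hy.2)).1, hBU hy⟩
  obtain ⟨⟨y, w⟩, ⟨hyw, -⟩, hyK, hwK⟩ := hsep _ isClosed_closure
    (h_large.mono (graphOn_subset_singleValuedPart_closure (hcont.mono hBU)))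
  have hyB : y ∈ closure B := by
    have := image_closure_subset_closure_image continuous_fst ⟨_, hyw, rfl⟩
    rw [image_fst_graphOn] at this
    exact closure_mono inter_subset_right this
  have hyU : y ∈ K ∩ U := ⟨hyK, (hBNU hyB).2⟩
  have hw : w = h y := eq_of_mem_closure_graphOn (hcont y hyU)
    (closure_mono (image_mono hBU) hyw)
  exact hwK (hw ▸ hmaps hyU)

/-- A sequence of plane sets, each containing `0` and `1` and meeting every uncountable closed set,
such that an injective continuous map from a nonempty open part of one of them into another exists
only if the two are the same and the map is the inclusion. -/
structure IsRigidFamily (K : ℕ → Set ℂ) : Prop where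
  zero_mem : ∀ t, 0 ∈ K t
  one_mem : ∀ t, 1 ∈ K t
  meetsUncountableClosed : ∀ t, MeetsUncountableClosed (K t)
  eq_and_eq_of_mem : ∀ {t s : ℕ} {U : Set ℂ} {h : ℂ → ℂ}, IsOpen U → ContinuousOn h (K t ∩ U) →
    InjOn h (K t ∩ U) → MapsTo h (K t ∩ U) (K s) → ∀ {x}, x ∈ K t ∩ U → s = t ∧ h x = x

theorem not_countable_of_isOpen_complex {U : Set ℂ} (hU : IsOpen U) (hne : U.Nonempty) :
    ¬U.Countable := fun hc =>
  ((continuum_le_cardinal_of_isOpen ℂ hU hne).trans hc.le_aleph0).not_gt aleph0_lt_continuum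

theorem exists_isRigidFamily : ∃ K, IsRigidFamily K := by
  have h_uncountable (U : Set (ℕ × ℂ)) (hU : IsOpen U) : U.Nonempty → ¬U.Countable := by
    rintro ⟨⟨t, x⟩, hx⟩ hc
    exact not_countable_of_isOpen_complex (hU.preimage (by fun_prop : Continuous (Prod.mk t)))
      ⟨x, hx⟩ (hc.preimage (Prod.mk_right_injective t))
  obtain ⟨K, hCK, hK, hrigid⟩ := exists_superset_isLocallyRigid h_uncountable
    ((Set.countable_univ (α := ℕ)).prod (toFinite ({0, 1} : Set ℂ)).countable)
  have hslice (t : ℕ) : IsClosedEmbedding (Prod.mk t : ℂ → ℕ × ℂ) :=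
    Function.LeftInverse.isClosedEmbedding (f := Prod.snd) (fun _ => rfl) (by fun_prop)
      (by fun_prop)
  refine ⟨fun t => Prod.mk t ⁻¹' K, fun t => hCK (by simp), fun t => hCK (by simp),
    fun t => hK.preimage (hslice t), fun {t s U h} hU hcont hinj hmaps {x} hx => ?_⟩
  have h_fst {z : ℕ × ℂ} (hz : z ∈ K ∩ {t} ×ˢ U) : z.1 = t := hz.2.1
  have h_snd : MapsTo Prod.snd (K ∩ {t} ×ˢ U) (Prod.mk t ⁻¹' K ∩ U) := by
    rintro ⟨_, y⟩ ⟨hyK, rfl, hyU⟩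
    exact ⟨hyK, hyU⟩
  have h_fixed := hrigid ({t} ×ˢ U) (fun z => (s, h z.2)) ((isOpen_discrete _).prod hU)
    (continuousOn_const.prodMk (hcont.comp continuousOn_snd h_snd))
    (fun y hy z hz hyz => Prod.ext ((h_fst hy).trans (h_fst hz).symm)
      (hinj (h_snd hy) (h_snd hz) (congrArg Prod.snd hyz)))
    (fun z hz => hmaps (h_snd hz)) ⟨hx.1, rfl, hx.2⟩
  exact ⟨congrArg Prod.fst h_fixed, congrArg Prod.snd h_fixed⟩

theorem IsRigidFamily.dense_diff {K : ℕ → Set ℂ} (hK : IsRigidFamily K) {D : Set ℂ}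
    (hD : D.Countable) (t : ℕ) : Dense (K t \ D) :=
  ((hK.meetsUncountableClosed t).diff_countable hD).dense fun _ => not_countable_of_isOpen_complex

theorem IsRigidFamily.isPreconnected_diff {K : ℕ → Set ℂ} (hK : IsRigidFamily K) {D : Set ℂ}
    (hD : D.Countable) (t : ℕ) : IsPreconnected (K t \ D) :=
  ((hK.meetsUncountableClosed t).diff_countable hD).isPreconnected
    (by rw [Complex.rank_real_complex]; exact Nat.one_lt_ofNat) (hK.dense_diff hD t)

end Rigidity

section LadderColouring

open Set

variable {A : Type*} [LinearOrder A]

/-- A function that is monotone and unbounded on the initial segment below `m`; it exists exactly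
when that segment has cofinality `ω`. -/
def IsCofinalHeight (m : A) (g : A → ℕ) : Prop :=
  MonotoneOn g (Iio m) ∧ ∀ n, ∃ x < m, n < g x

theorem exists_isCofinalHeight_of_isLUB {s : ℕ → A} (hs : StrictMono s) {l : A}
    (hl : IsLUB (range s) l) : ∃ g, IsCofinalHeight l g := by
  have hsl (n : ℕ) : s n < l := (hs n.lt_succ_self).trans_le (hl.1 ⟨_, rfl⟩)
  have hcofinal {y : A} (hy : y < l) : {k | y ≤ s k}.Nonempty := by
    obtain ⟨_, ⟨k, rfl⟩, hk⟩ := (lt_isLUB_iff hl).1 hy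
    exact ⟨k, hk.le⟩
  refine ⟨fun y => sInf {k | y ≤ s k}, fun y _ z hz hyz => ?_, fun n => ⟨s (n + 1), hsl _, ?_⟩⟩
  · exact Nat.sInf_le (hyz.trans (Nat.sInf_mem (hcofinal hz)))
  · exact hs.le_iff_le.1 (Nat.sInf_mem (hcofinal (hsl (n + 1))))

open Classical in
/-- Colours the pair `x < m` by the height of `x` in a chosen cofinal height function on the segment
below `m`, and by `0` if there is none. -/
noncomputable def ladderColouring (x m : A) : ℕ :=
  if h : ∃ g, IsCofinalHeight m g then h.choose x else 0

theorem isCofinalHeight_ladderColouring {m : A} (h : ∃ g, IsCofinalHeight m g) :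
    IsCofinalHeight m fun x => ladderColouring x m := by
  simpa only [ladderColouring, dif_pos h] using h.choose_spec

theorem monotoneOn_ladderColouring (m : A) : MonotoneOn (fun x => ladderColouring x m) (Iio m) := by
  by_cases h : ∃ g, IsCofinalHeight m g
  · exact (isCofinalHeight_ladderColouring h).1
  · simpa only [ladderColouring, dif_neg h] using monotoneOn_const

theorem eq_self_of_ladderColouring_eq [WellFoundedLT A] {f : A → A} (hf : StrictMono f)
    (hcol : ∀ x y, x < y → ladderColouring (f x) (f y) = ladderColouring x y) {l : A}
    (hl : ∃ g, IsCofinalHeight l g) (hmaps : MapsTo f (Iio l) (Iio l)) : f l = l := by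
  by_contra hne
  have hlt : l < f l := hf.le_apply.lt_of_ne' hne
  obtain ⟨y, hy, hbig⟩ := (isCofinalHeight_ladderColouring hl).2 (ladderColouring l (f l))
  simp only [← hcol y l hy] at hbig
  exact hbig.not_ge (monotoneOn_ladderColouring (f l) ((hmaps hy).trans hlt) hlt (hmaps hy).le)

/-- If `f` moved `x`, it would fix the supremum `l` of the iterates of `x` by
`eq_self_of_ladderColouring_eq`, so all the iterates would have the same height below `l`. -/
theorem eq_id_of_ladderColouring_eq [WellFoundedLT A] [OrderTop A] {f : A → A} (hf : StrictMono f)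
    (hcol : ∀ x y, x < y → ladderColouring (f x) (f y) = ladderColouring x y) : f = id := by
  funext x
  by_contra hne
  let s (n : ℕ) : A := f^[n] x
  have hs : StrictMono s := hf.strictMono_iterate_of_lt_map (hf.le_apply.lt_of_ne' hne)
  have hs_succ (n : ℕ) : s (n + 1) = f (s n) := Function.iterate_succ_apply' f n x
  obtain ⟨l, hl⟩ : ∃ l, IsLUB (range s) l :=
    have hbdd : (upperBounds (range s)).Nonempty := ⟨⊤, fun _ _ => le_top⟩
    ⟨_, wellFounded_lt.min_mem _ hbdd, fun _ hb => wellFounded_lt.min_le hb⟩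
  have hsl (n : ℕ) : s n < l := (hs n.lt_succ_self).trans_le (hl.1 ⟨_, rfl⟩)
  have hcofinal {y : A} (hy : y < l) : ∃ k, y < s k := by
    simpa only [exists_range_iff] using (lt_isLUB_iff hl).1 hy
  have hmaps : MapsTo f (Iio l) (Iio l) := fun y hy =>
    let ⟨k, hk⟩ := hcofinal hy
    (hf hk).trans (hs_succ k ▸ hsl (k + 1))
  have hheight := exists_isCofinalHeight_of_isLUB hs hl
  have hfl : f l = l := eq_self_of_ladderColouring_eq hf hcol hheight hmaps
  have hconst (k : ℕ) : ladderColouring (s k) l = ladderColouring x l := by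
    induction k with
    | zero => rfl
    | succ k ih => rw [← ih, ← hcol (s k) l (hsl k), hfl, hs_succ]
  obtain ⟨y, hy, hbig⟩ := (isCofinalHeight_ladderColouring hheight).2 (ladderColouring x l)
  obtain ⟨k, hk⟩ := hcofinal hy
  exact (hbig.trans_le (monotoneOn_ladderColouring l hy (hsl k) hk.le)).ne (hconst k).symm

end LadderColouring

section GluedGraph

open Set Topology

theorem continuous_coord {V : Type*} (v : V) :
    Continuous fun g : lp (fun _ : V => ℂ) ⊤ => g v :=
  (lp.evalCLM ℂ (fun _ : V => ℂ) ⊤ v).continuous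

variable {V : Type*} [LinearOrder V]

/-- The vertex of `ℓ^∞(V, ℂ)` indexed by `a`. -/
noncomputable def vertex (a : V) : lp (fun _ : V => ℂ) ⊤ :=
  lp.single ⊤ a 1

/-- The complex line through two vertices, parametrised so that `0` and `1` give the vertices. -/
noncomputable def edge (a b : V) (x : ℂ) : lp (fun _ : V => ℂ) ⊤ :=
  AffineMap.lineMap (vertex a) (vertex b) x

theorem vertex_apply (a v : V) : vertex a v = if v = a then 1 else 0 := by
  simp only [vertex, lp.single_apply, Pi.single_apply]

theorem vertex_injective : Function.Injective (vertex : V → lp (fun _ : V => ℂ) ⊤) := by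
  intro a b h
  by_contra hne
  simpa [vertex_apply, hne] using congrArg (fun g : lp (fun _ : V => ℂ) ⊤ => g a) h

theorem edge_zero (a b : V) : edge a b 0 = vertex a := AffineMap.lineMap_apply_zero _ _

theorem edge_one (a b : V) : edge a b 1 = vertex b := AffineMap.lineMap_apply_one _ _

theorem continuous_edge (a b : V) : Continuous (edge a b) := AffineMap.lineMap_continuous

theorem edge_apply (a b : V) (x : ℂ) (v : V) :
    edge a b x v = (1 - x) * vertex a v + x * vertex b v := by
  rw [edge, AffineMap.lineMap_apply_module]
  rfl

theorem edge_apply_left {a b : V} (hab : a ≠ b) (x : ℂ) : edge a b x a = 1 - x := by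
  simp [edge_apply, vertex_apply, hab]

theorem edge_apply_right {a b : V} (hab : a ≠ b) (x : ℂ) : edge a b x b = x := by
  simp [edge_apply, vertex_apply, hab.symm]

theorem edge_apply_of_ne {a b v : V} (hva : v ≠ a) (hvb : v ≠ b) (x : ℂ) : edge a b x v = 0 := by
  simp [edge_apply, vertex_apply, hva, hvb]

theorem edge_injective {a b : V} (hab : a ≠ b) : Function.Injective (edge a b) := fun x y h => by
  rw [← edge_apply_right hab x, h, edge_apply_right hab y]

/-- The union over all `a < b` of copies of `K (τ a b)` placed on the edges from `a` to `b`. -/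
def gluedGraph (K : ℕ → Set ℂ) (τ : V → V → ℕ) : Set (lp (fun _ : V => ℂ) ⊤) :=
  {g | ∃ a b x, a < b ∧ x ∈ K (τ a b) ∧ edge a b x = g}

variable {K : ℕ → Set ℂ} {τ σ : V → V → ℕ}

theorem edge_mem_gluedGraph {a b : V} (hab : a < b) {x : ℂ} (hx : x ∈ K (τ a b)) :
    edge a b x ∈ gluedGraph K τ := ⟨a, b, x, hab, hx, rfl⟩

theorem eq_edge_of_apply_ne_zero {g : lp (fun _ : V => ℂ) ⊤} (hg : g ∈ gluedGraph K τ) {a b : V}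
    (hab : a < b) (ha : g a ≠ 0) (hb : g b ≠ 0) : g b ∈ K (τ a b) ∧ g = edge a b (g b) := by
  obtain ⟨c, d, x, hcd, hx, rfl⟩ := hg
  have h_endpoint {v : V} (hv : edge c d x v ≠ 0) : v = c ∨ v = d := by
    by_contra! h
    exact hv (edge_apply_of_ne h.1 h.2 x)
  obtain ⟨rfl, rfl⟩ : a = c ∧ b = d := by
    rcases h_endpoint ha with rfl | rfl <;> rcases h_endpoint hb with rfl | rfl
    exacts [absurd hab (lt_irrefl _), ⟨rfl, rfl⟩, absurd hab hcd.not_gt, absurd hab (lt_irrefl _)]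
  rw [edge_apply_right hcd.ne]
  exact ⟨hx, rfl⟩

theorem apply_eq_zero_or_one_of_mem_gluedGraph {g : lp (fun _ : V => ℂ) ⊤}
    (hg : g ∈ gluedGraph K τ) (h : ∀ a b, a < b → g a ≠ 0 → g b = 0) (v : V) :
    g v = 0 ∨ g v = 1 := by
  obtain ⟨a, b, x, hab, -, rfl⟩ := hg
  have hx : 1 - x ≠ 0 → x = 0 := by
    simpa only [edge_apply_left hab.ne, edge_apply_right hab.ne] using h a b hab
  by_cases hva : v = a
  · rw [hva, edge_apply_left hab.ne]
    grind
  by_cases hvb : v = b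
  · rw [hvb, edge_apply_right hab.ne]
    grind
  exact Or.inl (edge_apply_of_ne hva hvb x)

namespace IsRigidFamily

variable {t : ℕ} {f : ℂ → lp (fun _ : V => ℂ) ⊤}

theorem isPreconnected (hK : IsRigidFamily K) (t : ℕ) : IsPreconnected (K t) := by
  simpa only [sdiff_empty] using hK.isPreconnected_diff countable_empty t

/-- Otherwise every value of `f` is a vertex, hence `f` is constant by connectedness. -/
theorem exists_apply_ne_zero (hK : IsRigidFamily K) (hcont : ContinuousOn f (K t))
    (hinj : InjOn f (K t)) (hmaps : MapsTo f (K t) (gluedGraph K τ)) :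
    ∃ x ∈ K t, ∃ a b, a < b ∧ f x a ≠ 0 ∧ f x b ≠ 0 := by
  by_contra! h
  have hcoord (v : V) : f 0 v = f 1 v := by
    refine (hK.isPreconnected t).constant_of_mapsTo
      (toFinite ({0, 1} : Set ℂ)).isDiscrete ((continuous_coord v).comp_continuousOn hcont)
      (fun x hx => apply_eq_zero_or_one_of_mem_gluedGraph (hmaps hx) (h x hx) v)
      (hK.zero_mem t) (hK.one_mem t)
  exact zero_ne_one (hinj (hK.zero_mem t) (hK.one_mem t) (lp.ext (funext hcoord)))

theorem eqOn_edge_of_apply_ne_zero (hK : IsRigidFamily K) (hcont : ContinuousOn f (K t))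
    (hinj : InjOn f (K t)) (hmaps : MapsTo f (K t) (gluedGraph K τ)) {a b : V} (hab : a < b)
    {x : ℂ} (hx : x ∈ K t) (ha : f x a ≠ 0) (hb : f x b ≠ 0) : τ a b = t ∧ f x = edge a b x := by
  obtain ⟨U, hU, hUeq⟩ : ∃ U, IsOpen U ∧ {y | f y a ≠ 0 ∧ f y b ≠ 0} ∩ K t = U ∩ K t :=
    continuousOn_iff'.1 hcont {g | g a ≠ 0 ∧ g b ≠ 0}
      ((isOpen_ne_fun (continuous_coord a) continuous_const).inter
        (isOpen_ne_fun (continuous_coord b) continuous_const))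
  have hU_ne {y : ℂ} (hy : y ∈ K t ∩ U) : f y a ≠ 0 ∧ f y b ≠ 0 :=
    (hUeq.ge ⟨hy.2, hy.1⟩).1
  have h_on_edge {y : ℂ} (hy : y ∈ K t ∩ U) : f y b ∈ K (τ a b) ∧ f y = edge a b (f y b) :=
    eq_edge_of_apply_ne_zero (hmaps hy.1) hab (hU_ne hy).1 (hU_ne hy).2
  have hxU : x ∈ K t ∩ U := ⟨hx, (hUeq.le ⟨⟨ha, hb⟩, hx⟩).1⟩
  obtain ⟨hτ, hfx⟩ := hK.eq_and_eq_of_mem hU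
    (((continuous_coord b).comp_continuousOn hcont).mono inter_subset_left)
    (fun y hy z hz hyz => hinj hy.1 hz.1 <|
      (h_on_edge hy).2.trans ((congrArg _ hyz).trans (h_on_edge hz).2.symm))
    (fun y hy => (h_on_edge hy).1) hxU
  exact ⟨hτ, (h_on_edge hxU).2.trans (congrArg _ hfx)⟩

theorem exists_eqOn_edge (hK : IsRigidFamily K) (hcont : ContinuousOn f (K t))
    (hinj : InjOn f (K t)) (hmaps : MapsTo f (K t) (gluedGraph K τ)) :
    ∃ a b, a < b ∧ τ a b = t ∧ EqOn f (edge a b) (K t) := by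
  obtain ⟨x, hx, a, b, hab, hxa, hxb⟩ := hK.exists_apply_ne_zero hcont hinj hmaps
  obtain ⟨hτ, hfx⟩ := hK.eqOn_edge_of_apply_ne_zero hcont hinj hmaps hab hx hxa hxb
  let S : Set ℂ := K t \ {0, 1}
  have hSK : S ⊆ K t := sdiff_subset
  have : PreconnectedSpace S :=
    isPreconnected_iff_preconnectedSpace.1 (hK.isPreconnected_diff (by simp) t)
  have hfS : Continuous fun y : S => f y :=
    continuousOn_iff_continuous_domRestrict.1 (hcont.mono hSK)
  have h_iff (y : S) : f y = edge a b y ↔ f y a ≠ 0 ∧ f y b ≠ 0 := by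
    refine ⟨fun h => ?_, fun h =>
      (hK.eqOn_edge_of_apply_ne_zero hcont hinj hmaps hab (hSK y.2) h.1 h.2).2⟩
    rw [h, edge_apply_left hab.ne, edge_apply_right hab.ne, sub_ne_zero]
    exact ⟨fun h1 => y.2.2 (Or.inr h1.symm), fun h0 => y.2.2 (Or.inl h0)⟩
  have h_clopen : IsClopen {y : S | f y = edge a b y} := by
    refine ⟨isClosed_eq hfS ((continuous_edge a b).comp continuous_subtype_val), ?_⟩
    simp only [h_iff]
    exact (isOpen_ne_fun ((continuous_coord a).comp hfS) continuous_const).inter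
      (isOpen_ne_fun ((continuous_coord b).comp hfS) continuous_const)
  have hxS : x ∈ S := by
    rw [hfx, edge_apply_left hab.ne, sub_ne_zero] at hxa
    rw [hfx, edge_apply_right hab.ne] at hxb
    exact ⟨hx, by rintro (rfl | rfl); exacts [hxb rfl, hxa rfl]⟩
  have h_univ := h_clopen.eq_univ ⟨⟨x, hxS⟩, hfx⟩
  have h_eqOn : EqOn f (edge a b) S := fun y hy => eq_univ_iff_forall.1 h_univ ⟨y, hy⟩
  exact ⟨a, b, hab, hτ, h_eqOn.of_subset_closure hcont (continuous_edge a b).continuousOn hSK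
    fun y _ => hK.dense_diff (by simp) t y⟩

end IsRigidFamily
end GluedGraph

section MarkedGraphs

open Set Topology

variable {K : ℕ → Set ℂ}

namespace IsRigidFamily

section

variable {V : Type*} [LinearOrder V] {τ σ : V → V → ℕ}

theorem vertex_mem_gluedGraph [Nontrivial V] (hK : IsRigidFamily K) (a : V) :
    vertex a ∈ gluedGraph K τ := by
  obtain ⟨b, hb⟩ := exists_ne a
  rcases hb.lt_or_gt with hba | hab
  · exact edge_one b a ▸ edge_mem_gluedGraph hba (hK.one_mem _)
  · exact edge_zero a b ▸ edge_mem_gluedGraph hab (hK.zero_mem _)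

theorem isPreconnected_gluedGraph [OrderTop V] (hK : IsRigidFamily K) :
    IsPreconnected (gluedGraph K τ) := by
  have h_edge (a b : V) : IsPreconnected (edge a b '' K (τ a b)) :=
    (hK.isPreconnected _).image _ (continuous_edge a b).continuousOn
  have h_subset {a b : V} (hab : a < b) : edge a b '' K (τ a b) ⊆ gluedGraph K τ :=
    image_subset_iff.2 fun x hx => edge_mem_gluedGraph hab hx
  have h_right (a b : V) : vertex b ∈ edge a b '' K (τ a b) := ⟨1, hK.one_mem _, edge_one a b⟩
  refine isPreconnected_of_forall (vertex ⊤) ?_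
  rintro _ ⟨a, b, x, hab, hx, rfl⟩
  have hx_image := mem_image_of_mem (edge a b) hx
  rcases eq_or_ne b ⊤ with rfl | hb
  · exact ⟨_, h_subset hab, h_right a ⊤, hx_image, h_edge a ⊤⟩
  · exact ⟨_, union_subset (h_subset hab) (h_subset hb.lt_top), Or.inr (h_right b ⊤),
      Or.inl hx_image, (h_edge a b).union (vertex b) (h_right a b)
        ⟨0, hK.zero_mem _, edge_zero b ⊤⟩ (h_edge b ⊤)⟩

theorem exists_strictMono_eqOn_edge [Nontrivial V] (hK : IsRigidFamily K)
    {f : lp (fun _ : V => ℂ) ⊤ → lp (fun _ : V => ℂ) ⊤} (hcont : ContinuousOn f (gluedGraph K τ))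
    (hinj : InjOn f (gluedGraph K τ)) (hmaps : MapsTo f (gluedGraph K τ) (gluedGraph K σ)) :
    ∃ F : V → V, StrictMono F ∧ ∀ a b, a < b →
      σ (F a) (F b) = τ a b ∧ EqOn (f ∘ edge a b) (edge (F a) (F b)) (K (τ a b)) := by
  have h_edge {a b : V} (hab : a < b) :
      ∃ c d, c < d ∧ σ c d = τ a b ∧ EqOn (f ∘ edge a b) (edge c d) (K (τ a b)) := by
    have h_mem : MapsTo (edge a b) (K (τ a b)) (gluedGraph K τ) := fun x hx =>
      edge_mem_gluedGraph hab hx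
    exact hK.exists_eqOn_edge (hcont.comp (continuous_edge a b).continuousOn h_mem)
      (hinj.comp (edge_injective hab.ne).injOn h_mem) (hmaps.comp h_mem)
  have h_endpoints {a b c d : V} (h : EqOn (f ∘ edge a b) (edge c d) (K (τ a b))) :
      f (vertex a) = vertex c ∧ f (vertex b) = vertex d := by
    simpa only [Function.comp_apply, edge_zero, edge_one] using
      And.intro (h (hK.zero_mem _)) (h (hK.one_mem _))
  have h_vertex (a : V) : ∃ c, f (vertex a) = vertex c := by
    obtain ⟨b, hb⟩ := exists_ne a
    rcases hb.lt_or_gt with hba | hab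
    · obtain ⟨c, d, -, -, h⟩ := h_edge hba
      exact ⟨d, (h_endpoints h).2⟩
    · obtain ⟨c, d, -, -, h⟩ := h_edge hab
      exact ⟨c, (h_endpoints h).1⟩
  choose F hF using h_vertex
  have h_image (a b : V) (hab : a < b) : F a < F b ∧
      σ (F a) (F b) = τ a b ∧ EqOn (f ∘ edge a b) (edge (F a) (F b)) (K (τ a b)) := by
    obtain ⟨c, d, hcd, hτ, h⟩ := h_edge hab
    obtain rfl : F a = c := vertex_injective ((hF a).symm.trans (h_endpoints h).1)
    obtain rfl : F b = d := vertex_injective ((hF b).symm.trans (h_endpoints h).2)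
    exact ⟨hcd, hτ, h⟩
  exact ⟨F, fun a b hab => (h_image a b hab).1, fun a b hab => (h_image a b hab).2⟩

end

end IsRigidFamily

variable {I : Type*} [LinearOrder I]

/-- The ladder colouring of `WithTop I` refined by a parity bit which marks the pairs with smaller
element `i`; it distinguishes the glued graphs belonging to different `i`. -/
noncomputable def markedColouring (i : I) (a b : WithTop I) : ℕ :=
  open Classical in 2 * ladderColouring a b + if a = i then 1 else 0

theorem ladderColouring_eq_of_markedColouring_eq {i j : I} {a b c d : WithTop I}
    (h : markedColouring i a b = markedColouring j c d) :
    ladderColouring a b = ladderColouring c d ∧ (a = i ↔ c = j) := by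
  unfold markedColouring at h
  constructor
  · split_ifs at h <;> lia
  · by_cases ha : a = i <;> by_cases hc : c = j <;> simp only [ha, hc, if_true, if_false] at h ⊢ <;>
      lia

theorem IsRigidFamily.eq_and_eqOn_id [WellFoundedLT I] [Nonempty I] (hK : IsRigidFamily K) {i j : I}
    {f : lp (fun _ : WithTop I => ℂ) ⊤ → lp (fun _ : WithTop I => ℂ) ⊤}
    (hcont : ContinuousOn f (gluedGraph K (markedColouring i)))
    (hinj : InjOn f (gluedGraph K (markedColouring i)))
    (hmaps : MapsTo f (gluedGraph K (markedColouring i)) (gluedGraph K (markedColouring j))) :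
    i = j ∧ EqOn f id (gluedGraph K (markedColouring i)) := by
  obtain ⟨F, hF, hedge⟩ := hK.exists_strictMono_eqOn_edge hcont hinj hmaps
  obtain rfl : F = id := eq_id_of_ladderColouring_eq hF fun a b hab =>
    (ladderColouring_eq_of_markedColouring_eq (hedge a b hab).1).1
  constructor
  · exact WithTop.coe_injective <|
      (ladderColouring_eq_of_markedColouring_eq (hedge i ⊤ (WithTop.coe_lt_top i)).1).2.2 rfl
  · rintro _ ⟨a, b, x, hab, hx, rfl⟩
    exact (hedge a b hab).2 hx

/-- The rigid connected space belonging to `i`. -/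
abbrev MarkedGraph (K : ℕ → Set ℂ) (i : I) : Type _ :=
  gluedGraph K (markedColouring i)

theorem IsRigidFamily.eq_and_val_eq [WellFoundedLT I] [Nonempty I] (hK : IsRigidFamily K) {i j : I}
    {f : MarkedGraph K i → MarkedGraph K j} (hcont : Continuous f) (hinj : Function.Injective f) :
    i = j ∧ ∀ y, (f y).1 = y.1 := by
  set g := Function.extend Subtype.val (fun y => (f y).1) id
  have hg (y : MarkedGraph K i) : g y = f y := Subtype.val_injective.extend_apply _ _ y
  obtain ⟨hij, h⟩ := hK.eq_and_eqOn_id (i := i) (j := j) (f := g)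
    (continuousOn_iff_continuous_domRestrict.2 <|
      (continuous_subtype_val.comp hcont).congr fun y => (hg y).symm)
    (fun y hy z hz hyz => by
      have := hinj (Subtype.ext ((hg ⟨y, hy⟩).symm.trans (hyz.trans (hg ⟨z, hz⟩))))
      exact congrArg Subtype.val this)
    (fun y hy => hg ⟨y, hy⟩ ▸ (f ⟨y, hy⟩).2)
  exact ⟨hij, fun y => (hg y).symm.trans (h y.2)⟩

end MarkedGraphs

section Telescope

open Set Topology Filter

theorem eq_zero_of_bijective_of_eventually_eq_add {π : ℕ → ℕ} (hπ : Function.Bijective π) {c : ℤ}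
    (hc : ∀ᶠ n in atTop, (π n : ℤ) = n + c) : c = 0 := by
  obtain ⟨N, hcN, hN⟩ :=
    ((eventually_ge_atTop c.natAbs).and (eventually_forall_ge_atTop.2 hc)).exists
  obtain ⟨T, hT⟩ : ∃ T : ℕ, (T : ℤ) = N + c := ⟨(N + c).toNat, by lia⟩
  have h_tail : π '' Ici N = Ici T := by
    ext m
    simp only [mem_image, mem_Ici]
    refine ⟨?_, fun hm => ⟨(m - c).toNat, by lia, ?_⟩⟩
    · rintro ⟨n, hn, rfl⟩
      have := hN n hn
      lia
    · have := hN (m - c).toNat (by lia)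
      lia
  have h_head : π '' Iio N = Iio T := by
    rw [← compl_Ici, ← compl_Ici, image_compl_eq hπ, h_tail]
  have h_card := ncard_image_of_injective (Iio N) hπ.injective
  rw [h_head, ncard_Iio_nat, ncard_Iio_nat] at h_card
  lia

variable {Y : Type u} [TopologicalSpace Y]

/-- Countably many copies of `Y`, the levels, together with points `limit k`, for `k : ℤ`. The
functions `β` determine the topology: when `β k` is a bump function concentrated near a point `p k`,
the points `p (n + 2 * k)` of the `n`-th level tend to `limit k` as `n → ∞`. -/
inductive Telescope (β : ℤ → C(Y, ℂ)) : Type u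
  | level (n : ℕ) (y : Y)
  | limit (k : ℤ)

namespace Telescope

variable {β : ℤ → C(Y, ℂ)}

/-- The projection of the telescope to its `m`-th level, all other points being sent to `inr ()`. -/
def layer (m : ℕ) : Telescope β → Y ⊕ Unit
  | level n y => if n = m then Sum.inl y else Sum.inr ()
  | limit _ => Sum.inr ()

/-- The function on the telescope measuring the proximity to `limit k`. -/
noncomputable def proximity (k : ℤ) : Telescope β → ℂ
  | level n y => β (n + 2 * k) y
  | limit j => if j = k then 1 else 0

/-- The coordinates which define the topology of the telescope. -/
noncomputable def coordinates (x : Telescope β) : (ℕ → Y ⊕ Unit) × (ℤ → ℂ) :=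
  (fun m => layer m x, fun k => proximity k x)

noncomputable instance : TopologicalSpace (Telescope β) :=
  .induced coordinates inferInstance

theorem layer_level_self (n : ℕ) (y : Y) : layer n (level n y : Telescope β) = Sum.inl y :=
  if_pos rfl

theorem layer_level_of_ne {n m : ℕ} (h : n ≠ m) (y : Y) :
    layer m (level n y : Telescope β) = Sum.inr () :=
  if_neg h

theorem layer_eq_inl_iff {m : ℕ} {x : Telescope β} {y : Y} :
    layer m x = Sum.inl y ↔ x = level m y := by
  cases x with
  | level n z =>
    rcases eq_or_ne n m with rfl | h
    · simp only [layer_level_self, Sum.inl.injEq, level.injEq, true_and]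
    · simp only [layer_level_of_ne h, reduceCtorEq, level.injEq, h, false_and]
  | limit k => simp only [layer, reduceCtorEq]

theorem range_level_eq_preimage (n : ℕ) :
    range (level n : Y → Telescope β) = layer n ⁻¹' range Sum.inl := by
  ext x
  simp only [mem_range, mem_preimage, eq_comm (b := layer n x), layer_eq_inl_iff, eq_comm (a := x)]

theorem coordinates_injective : Function.Injective (coordinates : Telescope β → _) := by
  intro x y h
  have h_layer (m : ℕ) : layer m x = layer m y := congrFun (congrArg Prod.fst h) m
  have h_proximity (k : ℤ) : proximity k x = proximity k y := congrFun (congrArg Prod.snd h) k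
  cases x with
  | level n z => exact (layer_eq_inl_iff.1 ((h_layer n).symm.trans (layer_level_self n z))).symm
  | limit k =>
    cases y with
    | level n z => exact layer_eq_inl_iff.1 ((h_layer n).trans (layer_level_self n z))
    | limit j =>
      by_contra hne
      simpa [proximity, show j ≠ k by rintro rfl; exact hne rfl] using h_proximity k

theorem isEmbedding_coordinates : IsEmbedding (coordinates : Telescope β → _) :=
  ⟨⟨rfl⟩, coordinates_injective⟩

theorem continuous_layer (m : ℕ) : Continuous (layer m : Telescope β → Y ⊕ Unit) :=
  (continuous_apply m).comp (continuous_fst.comp isEmbedding_coordinates.continuous)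

theorem continuous_proximity (k : ℤ) : Continuous (proximity k : Telescope β → ℂ) :=
  (continuous_apply k).comp (continuous_snd.comp isEmbedding_coordinates.continuous)

theorem tendsto_iff {ι : Type*} {l : Filter ι} {f : ι → Telescope β} {x : Telescope β} :
    Tendsto f l (𝓝 x) ↔ (∀ m, Tendsto (fun i => layer m (f i)) l (𝓝 (layer m x))) ∧
      ∀ k, Tendsto (fun i => proximity k (f i)) l (𝓝 (proximity k x)) := by
  rw [isEmbedding_coordinates.tendsto_nhds_iff, Prod.tendsto_iff, tendsto_pi_nhds, tendsto_pi_nhds]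
  rfl

theorem continuous_iff {Z : Type*} [TopologicalSpace Z] {f : Z → Telescope β} :
    Continuous f ↔ (∀ m, Continuous fun z => layer m (f z)) ∧
      ∀ k, Continuous fun z => proximity k (f z) := by
  rw [isEmbedding_coordinates.continuous_iff, continuous_prodMk, continuous_pi_iff,
    continuous_pi_iff]
  rfl

theorem metrizableSpace [TopologicalSpace.MetrizableSpace Y] :
    TopologicalSpace.MetrizableSpace (Telescope β) := by
  let _ := TopologicalSpace.metrizableSpaceMetric Y
  let _ : MetricSpace (Y ⊕ Unit) := Metric.metricSpaceSum
  exact isEmbedding_coordinates.metrizableSpace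

theorem isClopen_range_level (n : ℕ) : IsClopen (range (level n : Y → Telescope β)) := by
  rw [range_level_eq_preimage]
  exact (isClopen_range_inl).preimage (continuous_layer n)

theorem isEmbedding_level (n : ℕ) : IsEmbedding (level n : Y → Telescope β) := by
  have hcont : Continuous (level n : Y → Telescope β) := by
    refine continuous_iff.2 ⟨fun m => ?_, fun k => (β (n + 2 * k)).continuous⟩
    rcases eq_or_ne n m with rfl | h
    · simpa only [layer_level_self] using continuous_inl
    · simpa only [layer_level_of_ne h] using continuous_const
  refine .of_comp hcont (continuous_layer n) ?_
  convert IsEmbedding.inl using 1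
  exact funext (layer_level_self n)

theorem tendsto_level_limit {p : ℤ → Y} (hp : ∀ k l, β k (p l) = if k = l then 1 else 0) (k : ℤ) :
    Tendsto (fun n : ℕ => (level n (p (n + 2 * k)) : Telescope β)) atTop (𝓝 (limit k)) := by
  refine tendsto_iff.2 ⟨fun m => ?_, fun j => ?_⟩
  · refine tendsto_const_nhds.congr' ((eventually_gt_atTop m).mono fun n hn => ?_)
    exact (layer_level_of_ne hn.ne' _).symm
  · simp [proximity, hp, eq_comm]

/-- Moves the telescope two levels up; since `limit k` involves the points `p (n + 2 * k)`, it
becomes `limit (k - 1)`. -/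
def shift : Telescope β → Telescope β
  | level n y => level (n + 2) y
  | limit k => limit (k - 1)

theorem proximity_shift (k : ℤ) (x : Telescope β) :
    proximity k (shift x) = proximity (k + 1) x := by
  cases x with
  | level n y =>
    simp only [shift, proximity]
    congr 2
    push_cast
    ring
  | limit j => simp only [shift, proximity, sub_eq_iff_eq_add]

theorem layer_add_two_shift (m : ℕ) (x : Telescope β) : layer (m + 2) (shift x) = layer m x := by
  cases x <;> simp only [shift, layer, Nat.add_right_cancel_iff]

theorem layer_shift_of_lt {m : ℕ} (hm : m < 2) (x : Telescope β) :
    layer m (shift x) = Sum.inr () := by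
  cases x with
  | level n y => exact layer_level_of_ne (by lia) y
  | limit k => rfl

theorem isEmbedding_shift : IsEmbedding (shift : Telescope β → Telescope β) := by
  have hcont : Continuous (shift : Telescope β → Telescope β) := by
    refine continuous_iff.2 ⟨fun m => ?_, fun k => ?_⟩
    · rcases lt_or_ge m 2 with hm | hm
      · simpa only [layer_shift_of_lt hm] using continuous_const
      · obtain ⟨m, rfl⟩ := Nat.exists_eq_add_of_le' hm
        simpa only [layer_add_two_shift] using continuous_layer m
    · simpa only [proximity_shift] using continuous_proximity (k + 1)
  have hunshift : Continuous fun x : Telescope β =>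
      (fun m => layer (m + 2) x, fun k : ℤ => proximity (k - 1) x) :=
    (continuous_pi fun m => continuous_layer (m + 2)).prodMk
      (continuous_pi fun k => continuous_proximity (k - 1))
  refine .of_comp hcont hunshift ?_
  convert isEmbedding_coordinates (β := β) using 1
  funext x
  simp only [Function.comp_apply, coordinates, layer_add_two_shift, proximity_shift,
    sub_add_cancel]

theorem range_shift : range (shift : Telescope β → Telescope β) =
    (range (level 0 : Y → Telescope β) ∪ range (level 1 : Y → Telescope β))ᶜ := by
  ext x
  constructor
  · rintro ⟨x, rfl⟩ (⟨y, hy⟩ | ⟨y, hy⟩) <;> cases x <;> simp [shift] at hy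
  · intro hx
    match x with
    | level 0 y => exact absurd (Or.inl ⟨y, rfl⟩) hx
    | level 1 y => exact absurd (Or.inr ⟨y, rfl⟩) hx
    | level (n + 2) y => exact ⟨level n y, rfl⟩
    | limit k => exact ⟨limit (k + 1), congrArg limit (add_sub_cancel_right k 1)⟩

theorem isClopen_range_shift : IsClopen (range (shift : Telescope β → Telescope β)) := by
  rw [range_shift]
  exact ((isClopen_range_level 0).union (isClopen_range_level 1)).compl

theorem disjoint_range_shift_range_level_zero :
    Disjoint (range (shift : Telescope β → Telescope β)) (range (level 0)) := by
  rw [range_shift, disjoint_compl_left_iff_subset]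
  exact subset_union_left

theorem exists_eq_level_comp {X : Type*} [TopologicalSpace X] [PreconnectedSpace X] [Nontrivial X]
    {f : X → Telescope β} (hf : Continuous f) (hinj : Function.Injective f) :
    ∃ n, ∃ g : X → Y, Continuous g ∧ f = level n ∘ g := by
  obtain ⟨n, x, y, hxy⟩ : ∃ n x y, level n y = f x := by
    by_contra! h_level
    have h_limit (x : X) : ∃ k, f x = limit k := by
      cases hfx : f x with
      | level n y => exact absurd hfx.symm (h_level n x y)
      | limit k => exact ⟨k, rfl⟩
    obtain ⟨x, x', hne⟩ := exists_pair_ne X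
    obtain ⟨k, hk⟩ := h_limit x
    obtain ⟨j, hj⟩ := h_limit x'
    have h_const := isPreconnected_univ.constant_of_mapsTo
      (toFinite ({0, 1} : Set ℂ)).isDiscrete ((continuous_proximity k).comp hf).continuousOn
      (fun z _ => ?_) (mem_univ x) (mem_univ x')
    · have hjk : j ≠ k := by
        rintro rfl
        exact hne (hinj (hk.trans hj.symm))
      simp [proximity, hk, hj, hjk] at h_const
    · obtain ⟨i, hi⟩ := h_limit z
      simp only [Function.comp_apply, hi, proximity, mem_insert_iff, mem_singleton_iff]
      exact (ite_eq_or_eq (i = k) (1 : ℂ) 0).symm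
  have h_univ := ((isClopen_range_level n).preimage hf).eq_univ ⟨x, y, hxy⟩
  choose g hg using eq_univ_iff_forall.1 h_univ
  have hfg : f = level n ∘ g := (funext hg).symm
  exact ⟨n, g, (isEmbedding_level n).continuous_iff.2 (hfg ▸ hf), hfg⟩

theorem exists_map_level_eq_level [PreconnectedSpace Y] [Nontrivial Y]
    (hY : ∀ g : Y → Y, Continuous g → Function.Injective g → g = id)
    {φ : Telescope β → Telescope β} (hφ : Continuous φ) (hinj : Function.Injective φ) :
    ∃ π : ℕ → ℕ, Function.Injective π ∧ ∀ n y, φ (level n y) = level (π n) y := by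
  have h_level (n : ℕ) : ∃ m, ∀ y, φ (level n y) = level m y := by
    obtain ⟨m, g, hg, hφg⟩ := exists_eq_level_comp (hφ.comp (isEmbedding_level n).continuous)
      (hinj.comp (isEmbedding_level n).injective)
    have hg_inj : Function.Injective g := by
      refine .of_comp (f := level (β := β) m) ?_
      exact hφg ▸ hinj.comp (isEmbedding_level n).injective
    obtain rfl := hY g hg hg_inj
    exact ⟨m, congrFun hφg⟩
  choose π hφ_level using h_level
  obtain ⟨y⟩ : Nonempty Y := inferInstance
  refine ⟨π, fun n n' h => ?_, hφ_level⟩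
  exact (level.inj (hinj ((hφ_level n y).trans (h ▸ (hφ_level n' y).symm)))).1

theorem exists_map_limit_eq_limit {p : ℤ → Y} (hp : ∀ k l, β k (p l) = if k = l then 1 else 0)
    {φ : Telescope β → Telescope β} (hφ : Continuous φ) {π : ℕ → ℕ}
    (hφ_level : ∀ n y, φ (level n y) = level (π n) y) (hπ : Function.Injective π) (k : ℤ) :
    ∃ j, φ (limit k) = limit j := by
  cases h : φ (limit k) with
  | limit j => exact ⟨j, rfl⟩
  | level m y =>
    have h_tendsto := ((hφ.tendsto (limit k)).comp (tendsto_level_limit hp k)).eventually_mem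
      (h ▸ (isClopen_range_level m).isOpen.mem_nhds ⟨y, rfl⟩)
    have h_escape : ∀ᶠ n in atTop, π n ≠ m :=
      (Nat.cofinite_eq_atTop ▸ hπ.tendsto_cofinite).eventually_ne_atTop m
    obtain ⟨n, ⟨z, hz⟩, hn⟩ := (h_tendsto.and h_escape).exists
    rw [Function.comp_apply, hφ_level, level.injEq] at hz
    exact absurd hz.1.symm hn

theorem eventually_add_eq_of_map_limit {p : ℤ → Y}
    (hp : ∀ k l, β k (p l) = if k = l then 1 else 0) {φ : Telescope β → Telescope β}
    (hφ : Continuous φ) {π : ℕ → ℕ} (hφ_level : ∀ n y, φ (level n y) = level (π n) y) {j k : ℤ}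
    (h : φ (limit j) = limit k) :
    ∀ᶠ n : ℕ in atTop, (π n : ℤ) + 2 * k = n + 2 * j := by
  have h_one : proximity k (φ (limit j)) ≠ 0 := by simp [h, proximity]
  have h_tendsto := (((continuous_proximity k).comp hφ).tendsto (limit j)).comp
    (tendsto_level_limit hp j)
  filter_upwards [h_tendsto.eventually_ne h_one] with n hn
  by_contra hne
  exact hn (by simp only [Function.comp_apply, hφ_level, proximity, hp, if_neg hne])

/-- A counterexample would restrict to the inclusions of the `n`-th level as the `π n`-th one, for a
bijection `π` onto the positive integers. If it sends `limit 0` to `limit k`, then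
`π n + 2 * k = n` for large `n`, which is impossible because `-1 - 2 * k ≠ 0`. -/
theorem range_ne_compl_range_level_zero [PreconnectedSpace Y] [Nontrivial Y]
    (hY : ∀ g : Y → Y, Continuous g → Function.Injective g → g = id)
    {p : ℤ → Y} (hp : ∀ k l, β k (p l) = if k = l then 1 else 0)
    {φ : Telescope β → Telescope β} (hφ : Continuous φ) (hinj : Function.Injective φ) :
    range φ ≠ (range (level 0 : Y → Telescope β))ᶜ := by
  intro h_range
  obtain ⟨π, hπ, hφ_level⟩ := exists_map_level_eq_level hY hφ hinj
  have hπ_pos (n : ℕ) : π n ≠ 0 := fun h =>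
    h_range.le ⟨level n (p 0), rfl⟩ ⟨p 0, h ▸ (hφ_level n (p 0)).symm⟩
  have hπ_surj (m : ℕ) (hm : m ≠ 0) : ∃ n, π n = m := by
    obtain ⟨x, hx⟩ : level m (p 0) ∈ range φ := by
      rw [h_range]
      rintro ⟨y, hy⟩
      exact hm (level.inj hy).1.symm
    cases x with
    | level n y => exact ⟨n, (level.inj ((hφ_level n y).symm.trans hx)).1⟩
    | limit k =>
      obtain ⟨j, hj⟩ := exists_map_limit_eq_limit hp hφ hφ_level hπ k
      exact nomatch hx.symm.trans hj
  have h_bij : Function.Bijective fun n => π n - 1 := by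
    refine ⟨fun n n' h => hπ ?_, fun m => ?_⟩
    · exact Nat.sub_one_cancel (hπ_pos n).bot_lt (hπ_pos n').bot_lt h
    · obtain ⟨n, hn⟩ := hπ_surj (m + 1) m.succ_ne_zero
      exact ⟨n, Nat.sub_eq_of_eq_add hn⟩
  obtain ⟨k, hk⟩ := exists_map_limit_eq_limit hp hφ hφ_level hπ 0
  have h_odd := eq_zero_of_bijective_of_eventually_eq_add (c := -1 - 2 * k) h_bij <|
    (eventually_add_eq_of_map_limit hp hφ hφ_level hk).mono fun n hn => by
      have := hπ_pos n
      lia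
  lia

end Telescope
end Telescope

section Representation

open Set Topology

theorem isClopen_sigma_iff {I : Type*} {Z : I → Type*} [∀ i, TopologicalSpace (Z i)]
    {s : Set (Σ i, Z i)} : IsClopen s ↔ ∀ i, IsClopen (Sigma.mk i ⁻¹' s) := by
  simp only [IsClopen, isClosed_sigma_iff, isOpen_sigma_iff, forall_and]

theorem isClopen_image_of_isEmbedding {X Y : Type*} [TopologicalSpace X] [TopologicalSpace Y]
    {f : X → Y} (hf : IsEmbedding f) (h_range : IsClopen (range f)) {s : Set X} (hs : IsClopen s) :
    IsClopen (f '' s) :=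
  ⟨(IsClosedEmbedding.mk hf h_range.isClosed).isClosedMap s hs.isClosed,
    (IsOpenEmbedding.mk hf h_range.isOpen).isOpenMap s hs.isOpen⟩

theorem isClopen_image_sigmaMap {I : Type*} {Z W : I → Type*} [∀ i, TopologicalSpace (Z i)]
    [∀ i, TopologicalSpace (W i)] {f : ∀ i, Z i → W i} (hf : ∀ i, IsEmbedding (f i))
    (h_range : ∀ i, IsClopen (range (f i))) {s : Set (Σ i, Z i)} (hs : IsClopen s) :
    IsClopen (Sigma.map id f '' s) := by
  refine isClopen_sigma_iff.2 fun i => ?_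
  have h_slice : Sigma.mk i ⁻¹' (Sigma.map id f '' s) = f i '' (Sigma.mk i ⁻¹' s) := by
    ext w
    constructor
    · rintro ⟨⟨j, z⟩, hz, h⟩
      obtain rfl : j = i := congrArg Sigma.fst h
      exact ⟨z, hz, sigma_mk_injective h⟩
    · rintro ⟨z, hz, rfl⟩
      exact ⟨⟨i, z⟩, hz, rfl⟩
  rw [h_slice]
  exact isClopen_image_of_isEmbedding (hf i) (h_range i) (isClopen_sigma_iff.1 hs i)

/-- A topological space represents all preorders of cardinality at most `α`: each is isomorphic to
a family of pairwise non-homeomorphic clopen subsets, both when these are compared by embeddings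
with clopen range and when they are compared by arbitrary continuous injections. -/
def RepresentsPreorders (α : Cardinal.{u}) (X : Type u) [TopologicalSpace X] : Prop :=
  ∀ (Q : Type u) [Preorder Q], #Q ≤ α → ∃ Xq : Q → Set X,
    (∀ q, IsClopen (Xq q)) ∧
    (∀ q q', q ≠ q' → IsEmpty (Xq q ≃ₜ Xq q')) ∧
    (∀ q q', q ≤ q' → ∃ f : C(Xq q, Xq q'), IsEmbedding f ∧ IsClopen (range f)) ∧
    (∀ q q' (f : C(Xq q, Xq q')), Function.Injective f → q ≤ q')

theorem RepresentsPreorders.representsByClasses {α : Cardinal.{u}} {X : Type u}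
    [TopologicalSpace X] (hX : RepresentsPreorders α X) : RepresentsByClasses α X := by
  intro M hM Q le hQ le_refl le_trans
  let _ : Preorder Q := { le := le, le_refl := le_refl, le_trans := le_trans }
  obtain ⟨Xq, h_clopen, h_homeo, h_of_le, h_le⟩ := hX Q hQ
  refine ⟨Xq, h_clopen, h_homeo, fun q q' => ⟨fun hqq' => ?_, ?_⟩⟩
  · obtain ⟨f, hf, h_range⟩ := h_of_le q q' hqq'
    exact ⟨f, hM.2.1 _ _ f ⟨h_range, hf.toHomeomorph, fun _ => rfl⟩⟩
  · rintro ⟨f, hf⟩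
    exact h_le q q' f (hM.1 _ _ f hf)

variable {I : Type u} {Z : I → Type u} [∀ i, TopologicalSpace (Z i)] {B : ∀ i, Set (Z i)}

/-- Spaces `Z i` with clopen parts `B i` such that continuous injections between clopen subsets of
the disjoint sum preserve the index, every `Z i` embeds as a clopen subset into the complement of
`B i`, and no `Z i` admits a continuous bijection onto the complement of `B i`. -/
structure IsRigidSum (Z : I → Type u) [∀ i, TopologicalSpace (Z i)] (B : ∀ i, Set (Z i)) :
    Prop where
  isClopen : ∀ i, IsClopen (B i)
  fst_eq : ∀ {S : Set (Σ i, Z i)} {f : S → Σ i, Z i}, IsClopen S → Continuous f →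
    Function.Injective f → ∀ x, (f x).1 = x.1.1
  exists_isEmbedding : ∀ i, ∃ σ : Z i → Z i,
    IsEmbedding σ ∧ IsClopen (range σ) ∧ Disjoint (range σ) (B i)
  range_ne : ∀ {i} {φ : Z i → Z i}, Continuous φ → Function.Injective φ → range φ ≠ (B i)ᶜ

variable {Q : Type u} [Preorder Q] {e : Q → I}

/-- The set representing `q`: the whole summand of `q`, together with the complements of `B` in the
summands of the elements below `q`. -/
def representingSet (B : ∀ i, Set (Z i)) (e : Q → I) (q : Q) : Set (Σ i, Z i) :=
  {x | x.1 = e q ∨ x.1 ∈ e '' Iic q ∧ x.2 ∉ B x.1}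

namespace IsRigidSum

theorem nonempty (hB : IsRigidSum Z B) (i : I) : Nonempty (Z i) := by
  by_contra! h
  exact hB.range_ne (i := i) continuous_id Function.injective_id (Subsingleton.elim _ _)

theorem isClopen_representingSet (hB : IsRigidSum Z B) (e : Q → I) (q : Q) :
    IsClopen (representingSet B e q) := by
  refine isClopen_sigma_iff.2 fun i => ?_
  change IsClopen {z | i = e q ∨ i ∈ e '' Iic q ∧ z ∉ B i}
  by_cases h_eq : i = e q
  · simp only [h_eq, true_or]
    exact isClopen_univ
  by_cases h_mem : i ∈ e '' Iic q
  · simp only [h_eq, h_mem, false_or, true_and]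
    exact (hB.isClopen i).compl
  · simp only [h_eq, h_mem, false_or, false_and]
    exact isClopen_empty

theorem le_of_injective (hB : IsRigidSum Z B) (he : Function.Injective e) {q q' : Q}
    {f : representingSet B e q → representingSet B e q'} (hf : Continuous f)
    (hinj : Function.Injective f) : q ≤ q' := by
  obtain ⟨z⟩ := hB.nonempty (e q)
  let x : representingSet B e q := ⟨⟨e q, z⟩, Or.inl rfl⟩
  have hx : (f x).1.1 = e q := hB.fst_eq (hB.isClopen_representingSet e q)
    (continuous_subtype_val.comp hf) (Subtype.val_injective.comp hinj) x
  rcases (f x).2 with h | ⟨⟨r, hr, h⟩, -⟩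
  · exact (he (hx.symm.trans h)).le
  · exact (he (h.trans hx)) ▸ hr

/-- A homeomorphism would map the whole summand `Z (e q)`, which is contained in the first set, onto
its trace `(B (e q))ᶜ` on the second one. -/
theorem isEmpty_homeomorph (hB : IsRigidSum Z B) (he : Function.Injective e) {q q' : Q}
    (hne : q ≠ q') : IsEmpty (representingSet B e q ≃ₜ representingSet B e q') := by
  refine ⟨fun h => ?_⟩
  have h_fst (x) : (h x).1.1 = x.1.1 := hB.fst_eq (hB.isClopen_representingSet e q)
    (continuous_subtype_val.comp h.continuous) (Subtype.val_injective.comp h.injective) x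
  have h_ne : e q ≠ e q' := he.ne hne
  let ι (z : Z (e q)) : representingSet B e q := ⟨⟨e q, z⟩, Or.inl rfl⟩
  have h_lift (z : Z (e q)) : (h (ι z)).1 ∈ range (Sigma.mk (e q)) :=
    range_sigmaMk (e q) ▸ h_fst (ι z)
  choose φ hφ using h_lift
  have hφ_cont : Continuous φ := by
    have hι : Continuous ι := continuous_sigmaMk.subtype_mk _
    exact IsEmbedding.sigmaMk.continuous_iff.2
      ((continuous_subtype_val.comp (h.continuous.comp hι)).congr fun z => (hφ z).symm)
  have hφ_inj : Function.Injective φ := fun z w hzw => by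
    have h_val : (h (ι z)).1 = (h (ι w)).1 := by rw [← hφ, ← hφ, hzw]
    exact sigma_mk_injective (congrArg Subtype.val (h.injective (Subtype.ext h_val)))
  refine hB.range_ne hφ_cont hφ_inj (Subset.antisymm ?_ fun w hw => ?_)
  · rintro _ ⟨z, rfl⟩
    have h_mem : ⟨e q, φ z⟩ ∈ representingSet B e q' := hφ z ▸ (h (ι z)).2
    exact (h_mem.resolve_left h_ne).2
  · obtain ⟨z₀⟩ := hB.nonempty (e q)
    have h_below : e q ∈ e '' Iic q' := by
      have h_mem : ⟨e q, φ z₀⟩ ∈ representingSet B e q' := hφ z₀ ▸ (h (ι z₀)).2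
      exact (h_mem.resolve_left h_ne).1
    obtain ⟨x, hx⟩ := h.surjective ⟨⟨e q, w⟩, Or.inr ⟨h_below, hw⟩⟩
    obtain ⟨z, hz⟩ : x.1 ∈ range (Sigma.mk (e q)) := by
      rw [range_sigmaMk, mem_preimage, ← h_fst x, hx]
      rfl
    have hxz : x = ι z := Subtype.ext hz.symm
    exact ⟨z, sigma_mk_injective ((hφ z).trans (by rw [← hxz, hx]))⟩

theorem exists_isEmbedding_of_le (hB : IsRigidSum Z B) {q q' : Q} (hqq' : q ≤ q') :
    ∃ f : C(representingSet B e q, representingSet B e q'), IsEmbedding f ∧ IsClopen (range f) := by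
  classical
  choose σ hσ hσ_range hσ_disj using hB.exists_isEmbedding
  let τ (i : I) : Z i → Z i := if i = e q then σ i else id
  have hτ (i : I) : IsEmbedding (τ i) ∧ IsClopen (range (τ i)) := by
    by_cases h : i = e q
    · simpa only [τ, if_pos h] using ⟨hσ i, hσ_range i⟩
    · simpa only [τ, if_neg h, range_id] using ⟨IsEmbedding.id, isClopen_univ⟩
  have h_maps : MapsTo (Sigma.map id τ) (representingSet B e q) (representingSet B e q') := by
    rintro ⟨i, z⟩ hz
    refine Or.inr ⟨?_, ?_⟩
    · rcases hz with h | ⟨h, -⟩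
      · exact ⟨q, hqq', h.symm⟩
      · exact image_mono (Iic_subset_Iic.2 hqq') h
    · change τ i z ∉ B i
      by_cases h : i = e q
      · simpa only [τ, if_pos h] using (hσ_disj i).notMem_of_mem_left ⟨z, rfl⟩
      · simpa only [τ, if_neg h, id_eq] using (hz.resolve_left h).2
  have h_embedding : IsEmbedding (Sigma.map id τ) :=
    (isEmbedding_sigmaMap Function.injective_id).2 fun i => (hτ i).1
  refine ⟨⟨_, (h_embedding.restrict h_maps).continuous⟩, h_embedding.restrict h_maps, ?_⟩
  rw [ContinuousMap.coe_mk, h_maps.range_restrict]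
  exact (isClopen_image_sigmaMap (fun i => (hτ i).1) (fun i => (hτ i).2)
    (hB.isClopen_representingSet e q)).preimage continuous_subtype_val

theorem representsPreorders (hB : IsRigidSum Z B) : RepresentsPreorders #I (Σ i, Z i) := by
  intro Q _ hQ
  obtain ⟨e⟩ := hQ
  exact ⟨representingSet B e, hB.isClopen_representingSet e,
    fun q q' hne => hB.isEmpty_homeomorph e.injective hne,
    fun q q' => hB.exists_isEmbedding_of_le,
    fun q q' f => hB.le_of_injective e.injective f.continuous⟩

end IsRigidSum
end Representation

section TelescopeSum

open Set Topology Filter Telescope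

variable {I : Type u} {Y : I → Type u} [∀ i, TopologicalSpace (Y i)] {β : ∀ i, ℤ → C(Y i, ℂ)}
  {p : ∀ i, ℤ → Y i}

theorem fst_eq_of_level_mem [∀ i, PreconnectedSpace (Y i)] [∀ i, Nontrivial (Y i)]
    (hY : ∀ {i j} {f : Y i → Y j}, Continuous f → Function.Injective f → i = j)
    {S : Set (Σ i, Telescope (β i))} (hS : IsClopen S) {f : S → Σ i, Telescope (β i)}
    (hf : Continuous f) (hinj : Function.Injective f) {i : I} {n : ℕ} {y : Y i}
    (hy : ⟨i, level n y⟩ ∈ S) : (f ⟨_, hy⟩).1 = i := by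
  let ι (z : Y i) : Σ i, Telescope (β i) := ⟨i, level n z⟩
  have hι : IsEmbedding ι := IsEmbedding.sigmaMk.comp (isEmbedding_level n)
  have h_mem (z : Y i) : ι z ∈ S :=
    eq_univ_iff_forall.1 ((hS.preimage hι.continuous).eq_univ ⟨y, hy⟩) z
  let g (z : Y i) : S := ⟨ι z, h_mem z⟩
  have hg_inj : Function.Injective (f ∘ g) :=
    hinj.comp fun _ _ h => hι.injective (congrArg Subtype.val h)
  have : ConnectedSpace (Y i) := { toNonempty := ⟨y⟩ }
  obtain ⟨j, h, hh, hfh⟩ := (hf.comp (hι.continuous.subtype_mk h_mem)).exists_lift_sigma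
  have hh_inj : Function.Injective h := .of_comp (f := Sigma.mk j) (hfh ▸ hg_inj)
  obtain ⟨m, k, hk, rfl⟩ := exists_eq_level_comp hh hh_inj
  obtain rfl := hY hk (.of_comp hh_inj)
  exact congrArg Sigma.fst (congrFun hfh y)

theorem Telescope.isRigidSum [∀ i, PreconnectedSpace (Y i)] [∀ i, Nontrivial (Y i)]
    (hY : ∀ {i j} {f : Y i → Y j}, Continuous f → Function.Injective f → i = j)
    (hY_id : ∀ {i} {f : Y i → Y i}, Continuous f → Function.Injective f → f = id)
    (hp : ∀ i k l, β i k (p i l) = if k = l then 1 else 0) :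
    IsRigidSum (fun i => Telescope (β i)) fun _ => range (level 0) where
  isClopen _ := isClopen_range_level 0
  exists_isEmbedding _ :=
    ⟨shift, isEmbedding_shift, isClopen_range_shift, disjoint_range_shift_range_level_zero⟩
  range_ne {i} _ := range_ne_compl_range_level_zero (fun _ => hY_id) (hp i)
  fst_eq {S f} hS hf hinj := by
    let _ : TopologicalSpace I := ⊥
    have : DiscreteTopology I := ⟨rfl⟩
    have h_fst : Continuous (Sigma.fst : (Σ i, Telescope (β i)) → I) :=
      continuous_sigma fun _ => continuous_const
    have h_closed : IsClosed (Subtype.val '' {x : S | (f x).1 = x.1.1}) :=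
      hS.isClosed.isClosedMap_subtype_val _
        (isClosed_eq (h_fst.comp hf) (h_fst.comp continuous_subtype_val))
    rintro ⟨⟨i, x⟩, hx⟩
    cases x with
    | level n y => exact fst_eq_of_level_mem hY hS hf hinj hx
    | limit k =>
      have h_mk := continuous_sigmaMk (σ := fun i => Telescope (β i)) (i := i)
      have h_tendsto := (h_mk.tendsto (limit k)).comp (tendsto_level_limit (hp i) k)
      obtain ⟨x, h_eq, hxk⟩ := h_closed.mem_of_tendsto h_tendsto <|
        (h_tendsto.eventually_mem (hS.isOpen.mem_nhds hx)).mono fun n hn =>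
          ⟨⟨_, hn⟩, fst_eq_of_level_mem (n := n) hY hS hf hinj hn, rfl⟩
      obtain rfl : x = ⟨⟨i, limit k⟩, hx⟩ := Subtype.ext hxk
      exact h_eq

end TelescopeSum

section Cardinality

theorem Telescope.mk_le {Y : Type u} [TopologicalSpace Y] {β : ℤ → C(Y, ℂ)} {κ : Cardinal.{u}}
    (hκ : ℵ₀ ≤ κ) (hY : #Y ≤ κ) : #(Telescope β) ≤ κ := by
  have h_surj : Function.Surjective
      (Sum.elim (fun z : ℕ × Y => (level z.1 z.2 : Telescope β)) limit) := by
    rintro (⟨n, y⟩ | k)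
    exacts [⟨Sum.inl (n, y), rfl⟩, ⟨Sum.inr k, rfl⟩]
  refine (mk_le_of_surjective h_surj).trans ?_
  simp only [mk_sum, mk_prod, mk_denumerable, lift_aleph0, lift_uzero]
  exact add_le_of_le hκ (mul_le_of_le hκ hκ hY) hκ

theorem mk_gluedGraph_le {V : Type u} [LinearOrder V] {K : ℕ → Set ℂ} {τ : V → V → ℕ}
    {κ : Cardinal.{u}} (hκ : 𝔠 ≤ κ) (hV : #V ≤ κ) : #(gluedGraph K τ) ≤ κ := by
  have h_subset : gluedGraph K τ ⊆ Set.range fun z : (V × V) × ULift.{u} ℂ =>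
      edge z.1.1 z.1.2 z.2.down := by
    rintro _ ⟨a, b, x, -, -, rfl⟩
    exact ⟨((a, b), ⟨x⟩), rfl⟩
  have hκ' : ℵ₀ ≤ κ := aleph0_le_continuum.trans hκ
  refine (mk_le_mk_of_subset h_subset).trans (mk_range_le.trans ?_)
  simp only [mk_prod, lift_id, mk_uLift, mk_complex, lift_continuum]
  exact mul_le_of_le hκ' (mul_le_of_le hκ' hV hV) hκ

theorem mk_sigma_eq_of_le {I : Type u} {Z : I → Type u} [∀ i, Nonempty (Z i)] (hI : ℵ₀ ≤ #I)
    (hZ : ∀ i, #(Z i) ≤ #I) : #(Σ i, Z i) = #I := by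
  have h_surj : Function.Surjective (Sigma.fst : (Σ i, Z i) → I) :=
    fun i => ⟨⟨i, Classical.arbitrary (Z i)⟩, rfl⟩
  refine le_antisymm ?_ (mk_le_of_surjective h_surj)
  calc #(Σ i, Z i) = Cardinal.sum fun i => #(Z i) := mk_sigma Z
    _ ≤ Cardinal.sum fun _ : I => #I := sum_le_sum _ _ hZ
    _ = #I := by rw [sum_const', mul_eq_self hI]

end Cardinality

theorem metrizableSpace_sigma {I : Type*} {Z : I → Type*} [∀ i, TopologicalSpace (Z i)]
    [∀ i, TopologicalSpace.MetrizableSpace (Z i)] :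
    TopologicalSpace.MetrizableSpace (Σ i, Z i) := by
  let _ := fun i => TopologicalSpace.metrizableSpaceMetric (Z i)
  let _ : MetricSpace (Σ i, Z i) := Metric.Sigma.metricSpace
  infer_instance

theorem exists_isRigidSum (I : Type u) [LinearOrder I] [WellFoundedLT I] (hI : 𝔠 ≤ #I) :
    ∃ (Z : I → Type u) (_ : ∀ i, TopologicalSpace (Z i)) (B : ∀ i, Set (Z i)),
      IsRigidSum Z B ∧ (∀ i, TopologicalSpace.MetrizableSpace (Z i)) ∧ ∀ i, #(Z i) ≤ #I := by
  obtain ⟨K, hK⟩ := exists_isRigidFamily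
  have h_aleph0 : ℵ₀ ≤ #I := aleph0_le_continuum.trans hI
  have : Infinite I := infinite_iff.2 h_aleph0
  let d : ℤ ↪ WithTop I :=
    (Equiv.intEquivNat.toEmbedding.trans (Infinite.natEmbedding I)).trans .some
  let p (i : I) (k : ℤ) : MarkedGraph K i := ⟨vertex (d k), hK.vertex_mem_gluedGraph (d k)⟩
  let β (i : I) (k : ℤ) : C(MarkedGraph K i, ℂ) :=
    ⟨fun y => y.1 (d k), (continuous_coord (d k)).comp continuous_subtype_val⟩
  have hp (i : I) (k l : ℤ) : β i k (p i l) = if k = l then 1 else 0 := by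
    simp only [β, p, ContinuousMap.coe_mk, vertex_apply, d.injective.eq_iff]
  have h_connected (i : I) : PreconnectedSpace (MarkedGraph K i) :=
    isPreconnected_iff_preconnectedSpace.1 hK.isPreconnected_gluedGraph
  have h_nontrivial (i : I) : Nontrivial (MarkedGraph K i) :=
    ⟨p i 0, p i 1, fun h => by simpa [hp] using congrArg (β i 0) h⟩
  have h_card : #(WithTop I) ≤ #I := (mk_option.trans (add_one_eq h_aleph0)).le
  exact ⟨fun i => Telescope (β i), inferInstance, _,
    Telescope.isRigidSum (fun hf hinj => (hK.eq_and_val_eq hf hinj).1)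
      (fun hf hinj => funext fun y => Subtype.ext ((hK.eq_and_val_eq hf hinj).2 y)) hp,
    fun _ => Telescope.metrizableSpace,
    fun _ => Telescope.mk_le h_aleph0 (mk_gluedGraph_le hI h_card)⟩

theorem statement7_general (α : Cardinal.{u}) (hα : 𝔠 ≤ α) :
    ∃ (X : Type u) (_ : TopologicalSpace X),
      TopologicalSpace.MetrizableSpace X ∧ #X = α ∧ RepresentsPreorders α X := by
  obtain ⟨I, _, _, rfl⟩ : ∃ (I : Type u) (_ : LinearOrder I), WellFoundedLT I ∧ #I = α :=
    ⟨α.ord.ToType, inferInstance, inferInstance, mk_ord_toType α⟩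
  obtain ⟨Z, _, B, hB, _, hZ⟩ := exists_isRigidSum I hα
  have := hB.nonempty
  exact ⟨Σ i, Z i, inferInstance, metrizableSpace_sigma,
    mk_sigma_eq_of_le (aleph0_le_continuum.trans hα) hZ, hB.representsPreorders⟩

theorem statement7 (α : Cardinal.{u}) (hα : Cardinal.continuum ≤ α) :
    ∃ (X : Type u) (tX : TopologicalSpace X),
      @TopologicalSpace.MetrizableSpace X tX ∧ #X = α ∧
      @RepresentsByClasses α X tX := by
  obtain ⟨X, tX, hX, h_card, h_rep⟩ := statement7_general α hα
  exact ⟨X, tX, hX, h_card, h_rep.representsByClasses⟩
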